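/- Let E be a complex Banach space, 0 < δ < 1, and let A = {z ∈ ℂ : 1−δ < |z| < 1+δ}. Let f : A → E be holomorphic and bounded. Then the Fourier coefficients of f|_𝕊 are absolutely summable, so ‖f‖ := max{ sup_{z∈A} ‖f(z)‖ , ∑_{k∈ℤ} ‖(f|_𝕊)^̂_k‖ } is finite; and there exist a holomorphic map f₊ : {z : |z| < 1+δ} → E and a holomorphic map f₋ : {z : |z| > 1−δ} → E with f₋(z) → 0 as |z| → ∞, such that f = f₊ + f₋ on A, the restrictions of f₊ and f₋ to A are bounded with absolutely summable boundary Fourier coefficients, and ‖f₊|_A‖ ≤ 2‖f‖ and ‖f₋|_A‖ ≤ 2‖f‖ (where for g ∈ {f₊|_A, f₋|_A}, ‖g‖ := max{ sup_{z∈A} ‖g(z)‖ , ∑_{k∈ℤ} ‖(g|_𝕊)^̂_k‖ }). -/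

import Mathlib

open Metric Filter

/-- The `k`-th Fourier coefficient `∫₀¹ e^{−2πikt} f(e^{2πit}) dt` of a Banach-space
valued function on the unit circle (given as a function on `ℂ`; only its values on the
circle matter). -/
noncomputable def vFourierCoeff {E : Type*} [NormedAddCommGroup E] [NormedSpace ℂ E]
    (f : ℂ → E) (k : ℤ) : E :=
  ∫ t in (0:ℝ)..1,
    Complex.exp (-(2 * (Real.pi : ℂ) * Complex.I * (k : ℂ) * (t : ℂ))) •
      f (Complex.exp (2 * (Real.pi : ℂ) * Complex.I * (t : ℂ)))

/-- The norm `max{sup-norm on the annulus {1−δ<|z|<1+δ}, ℓ¹-norm of the boundary Fourier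
coefficients}` of a function `f : ℂ → E`. -/
noncomputable def annulusWienerNorm {E : Type*} [NormedAddCommGroup E] [NormedSpace ℂ E]
    (δ : ℝ) (f : ℂ → E) : ℝ :=
  max (⨆ z : {z : ℂ | 1 - δ < ‖z‖ ∧ ‖z‖ < 1 + δ}, ‖f z‖)
    (∑' k : ℤ, ‖vFourierCoeff f k‖)

/-- Laurent coefficient computed on the circle of radius `r`. -/
noncomputable def laurentC {E : Type*} [NormedAddCommGroup E] [NormedSpace ℂ E]
    (f : ℂ → E) (k : ℤ) (r : ℝ) : E :=
  (2 * (Real.pi : ℂ) * Complex.I)⁻¹ • ∮ z in C(0, r), z ^ (-k - 1) • f z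

section helpers
variable {E : Type*} [NormedAddCommGroup E] [NormedSpace ℂ E]

lemma vFourierCoeff_eq_laurentC (f : ℂ → E) (k : ℤ) :
    vFourierCoeff f k = laurentC f k 1 := by
  have h2 : (2 * Real.pi : ℝ) ≠ 0 := by positivity
  have h3 : (2 * (Real.pi : ℂ) * Complex.I) ≠ 0 := by
    simp [Real.pi_ne_zero]
  unfold laurentC circleIntegral
  have key := intervalIntegral.integral_comp_mul_left (a := 0) (b := 1)
    (fun θ : ℝ => deriv (circleMap 0 1) θ • (circleMap 0 1 θ) ^ (-k - 1) • f (circleMap 0 1 θ)) h2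
  rw [mul_zero, mul_one] at key
  have key2 : (∫ θ in (0:ℝ)..2 * Real.pi,
      deriv (circleMap 0 1) θ • (circleMap 0 1 θ) ^ (-k - 1) • f (circleMap 0 1 θ))
      = ((2 * Real.pi : ℝ) : ℂ) • ∫ t in (0:ℝ)..1,
        deriv (circleMap 0 1) (2 * Real.pi * t) • (circleMap 0 1 (2 * Real.pi * t)) ^ (-k - 1) •
          f (circleMap 0 1 (2 * Real.pi * t)) := by
    rw [key, Complex.coe_smul, smul_inv_smul₀ h2]
  rw [key2, smul_smul, ← intervalIntegral.integral_smul]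
  unfold vFourierCoeff
  refine intervalIntegral.integral_congr fun t _ => ?_
  have hc : circleMap 0 1 (2 * Real.pi * t) = Complex.exp (2 * (Real.pi : ℂ) * Complex.I * (t : ℂ)) := by
    simp only [circleMap, zero_add, Complex.ofReal_one, one_mul]
    congr 1; push_cast; ring
  simp only [deriv_circleMap]
  rw [hc, smul_smul, smul_smul]
  congr 1
  have he := Complex.exp_ne_zero (2 * (Real.pi : ℂ) * Complex.I * (t : ℂ))
  have h4 : Complex.exp (-(2 * (Real.pi : ℂ) * Complex.I * (k : ℂ) * (t : ℂ)))
      = Complex.exp (2 * (Real.pi : ℂ) * Complex.I * (t : ℂ)) ^ (-k) := by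
    rw [← Complex.exp_int_mul]; congr 1; push_cast; ring
  rw [h4, zpow_sub_one₀ he]
  push_cast
  field_simp

lemma annulus_isOpen (lo hi : ℝ) : IsOpen {z : ℂ | lo < ‖z‖ ∧ ‖z‖ < hi} :=
  (isOpen_lt continuous_const continuous_norm).inter (isOpen_lt continuous_norm continuous_const)

variable [CompleteSpace E]

lemma circleIntegral_indep {lo hi : ℝ} (hlo : 0 ≤ lo) {g : ℂ → E}
    (hg : DifferentiableOn ℂ g {z : ℂ | lo < ‖z‖ ∧ ‖z‖ < hi}) {r R : ℝ} (h1 : lo < r)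
    (h2 : r ≤ R) (h3 : R < hi) :
    (∮ z in C(0, R), g z) = ∮ z in C(0, r), g z := by
  apply Complex.circleIntegral_eq_of_differentiable_on_annulus_off_countable
    (hlo.trans_lt h1) h2 (s := ∅) Set.countable_empty
  · refine hg.continuousOn.mono fun z hz => ?_
    simp only [Set.mem_sdiff, mem_closedBall, mem_ball, dist_zero_right, not_lt] at hz
    exact ⟨by linarith [hz.2], by linarith [hz.1]⟩
  · intro z hz
    simp only [Set.mem_sdiff, mem_closedBall, mem_ball, dist_zero_right, not_le] at hz
    exact hg.differentiableAt ((annulus_isOpen lo hi).mem_nhds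
      ⟨by linarith [hz.1.2], by linarith [hz.1.1]⟩)

lemma laurentC_indep {lo hi : ℝ} (hlo : 0 ≤ lo) {f : ℂ → E}
    (hf : DifferentiableOn ℂ f {z : ℂ | lo < ‖z‖ ∧ ‖z‖ < hi}) (k : ℤ) {r R : ℝ} (h1 : lo < r)
    (h1' : r < hi) (h2 : lo < R) (h3 : R < hi) :
    laurentC f k R = laurentC f k r := by
  have hg : DifferentiableOn ℂ (fun z : ℂ => z ^ (-k - 1) • f z) {z : ℂ | lo < ‖z‖ ∧ ‖z‖ < hi} := by
    refine DifferentiableOn.smul ?_ hf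
    intro z hz
    refine (differentiableAt_zpow.2 (Or.inl ?_)).differentiableWithinAt
    exact norm_pos_iff.1 (hlo.trans_lt hz.1)
  unfold laurentC
  rcases le_total r R with h | h
  · rw [circleIntegral_indep hlo hg h1 h h3]
  · rw [circleIntegral_indep hlo hg h2 h h1']

lemma laurentC_norm_le {f : ℂ → E} (k : ℤ) {r M : ℝ} (hr : 0 < r)
    (hM : ∀ z : ℂ, ‖z‖ = r → ‖f z‖ ≤ M) : ‖laurentC f k r‖ ≤ M * r ^ (-k) := by
  unfold laurentC
  refine (circleIntegral.norm_two_pi_i_inv_smul_integral_le_of_norm_le_const (C := r ^ (-k - 1) * M)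
    hr.le ?_).trans (le_of_eq ?_)
  · intro z hz
    rw [mem_sphere_zero_iff_norm] at hz
    rw [norm_smul, norm_zpow, hz]
    have := hM z hz
    gcongr
  · rw [zpow_sub_one₀ hr.ne']; field_simp

lemma cauchy_annulus {lo hi : ℝ} (hlo : 0 ≤ lo) {f : ℂ → E}
    (hf : DifferentiableOn ℂ f {z : ℂ | lo < ‖z‖ ∧ ‖z‖ < hi}) {r R : ℝ} {w : ℂ} (h1 : lo < r)
    (h2 : r < ‖w‖) (h3 : ‖w‖ < R) (h4 : R < hi) :
    f w = (2 * (Real.pi : ℂ) * Complex.I)⁻¹ • (∮ z in C(0, R), (z - w)⁻¹ • f z)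
      + (2 * (Real.pi : ℂ) * Complex.I)⁻¹ • (∮ z in C(0, r), (w - z)⁻¹ • f z) := by
  have hr : 0 < r := hlo.trans_lt h1
  have hR : 0 < R := by linarith [norm_nonneg w]
  have hp : (2 * (Real.pi : ℂ) * Complex.I) ≠ 0 := by simp [Real.pi_ne_zero]
  have hg := (Complex.differentiableOn_dslope
    ((annulus_isOpen lo hi).mem_nhds (show w ∈ {z : ℂ | lo < ‖z‖ ∧ ‖z‖ < hi} from
      ⟨by linarith, by linarith⟩))).2 hf
  have e := circleIntegral_indep hlo hg h1 (h2.trans h3).le h4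
  have gen : ∀ ρ : ℝ, lo < ρ → ρ < hi → ρ ≠ ‖w‖ →
      (∮ z in C(0, ρ), dslope f w z) = (∮ z in C(0, ρ), (z - w)⁻¹ • f z)
        - (∮ z in C(0, ρ), (z - w)⁻¹) • f w := by
    intro ρ ha hb hne
    have hρ : 0 < ρ := hlo.trans_lt ha
    have hz' : ∀ z ∈ sphere (0:ℂ) ρ, z - w ≠ 0 := by
      intro z hz h
      rw [mem_sphere_zero_iff_norm] at hz
      rw [sub_eq_zero] at h
      exact hne (by rw [← hz, h])
    have c1 : ContinuousOn (fun z : ℂ => (z - w)⁻¹) (sphere (0:ℂ) ρ) :=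
      (continuousOn_id.sub continuousOn_const).inv₀ hz'
    have c2 : ContinuousOn f (sphere (0:ℂ) ρ) := hf.continuousOn.mono fun z hz => by
      rw [mem_sphere_zero_iff_norm] at hz
      exact ⟨by rw [hz]; exact ha, by rw [hz]; exact hb⟩
    have i1 : CircleIntegrable (fun z => (z - w)⁻¹ • f z) 0 ρ :=
      (c1.smul c2).circleIntegrable hρ.le
    have i2 : CircleIntegrable (fun z => (z - w)⁻¹ • f w) 0 ρ :=
      (c1.smul continuousOn_const).circleIntegrable hρ.le
    rw [← circleIntegral.integral_smul_const, ← circleIntegral.integral_sub i1 i2]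
    refine circleIntegral.integral_congr hρ.le fun z hz => ?_
    rw [dslope_of_ne _ (sub_ne_zero.1 (hz' z hz)), slope_def_module, smul_sub]
  rw [gen R (by linarith) h4 h3.ne', gen r h1 (by linarith) h2.ne,
    circleIntegral.integral_sub_inv_of_mem_ball (by simpa using h3)] at e
  have z0 : (∮ z in C(0, r), (z - w)⁻¹) = 0 := by
    have hz' : ∀ z ∈ closedBall (0:ℂ) r, z - w ≠ 0 := by
      intro z hz h
      rw [mem_closedBall_zero_iff] at hz
      rw [sub_eq_zero] at h
      rw [h] at hz; linarith
    refine Complex.circleIntegral_eq_zero_of_differentiable_on_off_countable hr.le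
      Set.countable_empty ((continuousOn_id.sub continuousOn_const).inv₀ hz') ?_
    intro z hz
    exact (differentiableAt_id.sub_const w).inv (hz' z (ball_subset_closedBall hz.1))
  rw [z0, zero_smul, sub_zero] at e
  have e2 : (∮ z in C(0, r), (w - z)⁻¹ • f z) = - ∮ z in C(0, r), (z - w)⁻¹ • f z := by
    rw [← neg_one_smul ℂ, ← circleIntegral.integral_smul]
    congr 1; ext z
    rw [← neg_sub z w, inv_neg, neg_smul, neg_one_smul]
  rw [e2, ← e, ← smul_add, eq_inv_smul_iff₀ hp]
  abel

open MeasureTheory in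
lemma hasSum_inner {f : ℂ → E} {r : ℝ} {w : ℂ} (hr : 0 < r)
    (hf : CircleIntegrable f 0 r) (hw : r < ‖w‖) :
    HasSum (fun n : ℕ => ∮ z in C(0, r), (z / w) ^ n • w⁻¹ • f z)
      (∮ z in C(0, r), (w - z)⁻¹ • f z) := by
  have hw0 : 0 < ‖w‖ := hr.trans hw
  have hwn : w ≠ 0 := norm_pos_iff.1 hw0
  have hwR : r / ‖w‖ ∈ Set.Ico (0 : ℝ) 1 :=
    ⟨by positivity, (div_lt_one hw0).2 hw⟩
  refine intervalIntegral.hasSum_integral_of_dominated_convergence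
      (fun n θ => ‖f (circleMap 0 r θ)‖ * (r / ‖w‖) ^ n) (fun n => ?_) (fun n => ?_) ?_ ?_ ?_
  · simp only [deriv_circleMap]
    apply_rules [AEStronglyMeasurable.smul, hf.def'.1] <;> apply Measurable.aestronglyMeasurable
    · fun_prop
    · fun_prop
    · fun_prop
  · refine Eventually.of_forall fun θ _ => ?_
    simp only [deriv_circleMap, norm_smul, norm_mul, norm_pow, norm_div, norm_inv, norm_circleMap_zero,
      abs_of_pos hr, Complex.norm_I, mul_one]
    have : r * ((r / ‖w‖) ^ n * (‖w‖⁻¹ * ‖f (circleMap 0 r θ)‖))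
      = (r / ‖w‖) * (‖f (circleMap 0 r θ)‖ * (r / ‖w‖) ^ n) := by
      field_simp
    rw [this]
    exact mul_le_of_le_one_left (by positivity) hwR.2.le
  · exact Eventually.of_forall fun _ _ => (summable_geometric_of_lt_one hwR.1 hwR.2).mul_left _
  · simpa only [tsum_mul_left, tsum_geometric_of_lt_one hwR.1 hwR.2] using
      hf.norm.mul_continuousOn continuousOn_const
  · refine Eventually.of_forall fun θ _ => HasSum.const_smul _ ?_
    simp only [smul_smul]
    refine HasSum.smul_const ?_ _
    have : ‖circleMap 0 r θ / w‖ < 1 := by simpa [abs_of_pos hr] using hwR.2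
    convert! (hasSum_geometric_of_norm_lt_one this).mul_right _ using 1
    rw [← mul_inv, sub_mul, div_mul_cancel₀ _ hwn, one_mul]

lemma powser_diff {c : ℕ → E} {ρ : ℝ} (h : ∀ s, 0 < s → s < ρ → Summable fun n => ‖c n‖ * s ^ n) :
    DifferentiableOn ℂ (fun u : ℂ => ∑' n : ℕ, u ^ n • c n) (ball 0 ρ) := by
  intro u hu
  rw [mem_ball_zero_iff] at hu
  obtain ⟨s, hs1, hs2⟩ := exists_between hu
  have hs0 : 0 < s := (norm_nonneg u).trans_lt hs1
  have := Complex.differentiableOn_tsum_of_summable_norm (F := fun (n : ℕ) (u : ℂ) => u ^ n • c n)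
    (U := ball 0 s) (h s hs0 hs2)
    (fun n => ((differentiable_id.pow n).smul_const (c n)).differentiableOn) isOpen_ball
    (fun n w hw => by
      rw [mem_ball_zero_iff] at hw
      rw [norm_smul, norm_pow, mul_comm]
      gcongr)
  exact (this.differentiableAt (isOpen_ball.mem_nhds (by simpa using hs1))).differentiableWithinAt


lemma laurent_fp_zero {ρ : ℝ} (hρ : 1 < ρ) {g : ℂ → E}
    (hg : DifferentiableOn ℂ g {z : ℂ | ‖z‖ < ρ}) {k : ℤ} (hk : k < 0) : vFourierCoeff g k = 0 := by
  rw [vFourierCoeff_eq_laurentC]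
  unfold laurentC
  obtain ⟨n, hn⟩ : ∃ n : ℕ, -k - 1 = n := ⟨(-k - 1).toNat, by omega⟩
  have hd : DifferentiableOn ℂ (fun z : ℂ => z ^ (-k - 1) • g z) {z : ℂ | ‖z‖ < ρ} := by
    simp only [hn, zpow_natCast]
    exact (differentiable_id.pow n).differentiableOn.smul hg
  rw [Complex.circleIntegral_eq_zero_of_differentiable_on_off_countable zero_le_one
      Set.countable_empty, smul_zero]
  · refine hd.continuousOn.mono fun z hz => ?_
    rw [mem_closedBall_zero_iff] at hz
    exact hz.trans_lt hρ
  · intro z hz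
    have hz1 := mem_ball_zero_iff.1 hz.1
    exact hd.differentiableAt ((isOpen_lt continuous_norm continuous_const).mem_nhds
      (hz1.trans hρ))

lemma laurent_fm_zero {lo : ℝ} (hlo : 0 ≤ lo) (hlo1 : lo < 1) {g : ℂ → E}
    (hg : DifferentiableOn ℂ g {z : ℂ | lo < ‖z‖})
    (ht : Tendsto g (comap (fun z : ℂ => ‖z‖) atTop) (nhds 0)) {k : ℤ} (hk : 0 ≤ k) :
    vFourierCoeff g k = 0 := by
  rw [vFourierCoeff_eq_laurentC, ← norm_le_zero_iff]
  refine le_of_forall_pos_le_add fun ε hε => ?_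
  rw [zero_add]
  have h1 : ∀ᶠ z in comap (fun z : ℂ => ‖z‖) atTop, ‖g z‖ ≤ ε := by
    have := ht.norm
    rw [norm_zero] at this
    exact this.eventually_le_const hε
  rw [eventually_comap] at h1
  obtain ⟨R, hR, hR1⟩ := (h1.and (eventually_ge_atTop 1)).exists
  have hR0 : 0 < R := by linarith
  rw [← laurentC_indep (lo := lo) (hi := R + 1) hlo (hg.mono fun z hz => hz.1) k hlo1
    (by linarith) (by linarith : lo < R) (by linarith)]
  refine (laurentC_norm_le k hR0 (M := ε) hR).trans ?_
  refine mul_le_of_le_one_right hε.le ?_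
  exact zpow_le_one_of_nonpos₀ hR1 (by omega)

lemma vFourierCoeff_add {f g h : ℂ → E} (hg : ContinuousOn g (sphere 0 1))
    (hh : ContinuousOn h (sphere 0 1)) (e : ∀ z ∈ sphere (0:ℂ) 1, f z = g z + h z) (k : ℤ) :
    vFourierCoeff f k = vFourierCoeff g k + vFourierCoeff h k := by
  simp only [vFourierCoeff_eq_laurentC, laurentC]
  have hz : ContinuousOn (fun z : ℂ => z ^ (-k - 1)) (sphere (0:ℂ) 1) := by
    refine continuousOn_id.zpow₀ _ fun z hz => Or.inl ?_
    exact ne_of_mem_sphere hz one_ne_zero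
  have i1 : CircleIntegrable (fun z => z ^ (-k - 1) • g z) 0 1 :=
    (hz.smul hg).circleIntegrable zero_le_one
  have i2 : CircleIntegrable (fun z => z ^ (-k - 1) • h z) 0 1 :=
    (hz.smul hh).circleIntegrable zero_le_one
  rw [← smul_add, ← circleIntegral.integral_add i1 i2]
  congr 1
  refine circleIntegral.integral_congr zero_le_one fun z hz => ?_
  simp only [e z hz, smul_add]

lemma wiener_final {δ : ℝ} (hδ0 : 0 < δ) (f g : ℂ → E)
    (hs : Summable fun k : ℤ => ‖vFourierCoeff f k‖)
    (hk : ∀ k, ‖vFourierCoeff g k‖ ≤ ‖vFourierCoeff f k‖)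
    (hb : ∀ z : ℂ, 1 - δ < ‖z‖ → ‖z‖ < 1 + δ → ‖g z‖ ≤ 2 * annulusWienerNorm δ f) :
    (Summable fun k : ℤ => ‖vFourierCoeff g k‖) ∧
      annulusWienerNorm δ g ≤ 2 * annulusWienerNorm δ f := by
  have hs' : Summable fun k : ℤ => ‖vFourierCoeff g k‖ :=
    Summable.of_nonneg_of_le (fun _ => norm_nonneg _) hk hs
  refine ⟨hs', ?_⟩
  have h0 : 0 ≤ ∑' k : ℤ, ‖vFourierCoeff f k‖ := tsum_nonneg fun _ => norm_nonneg _
  have h1 : ∑' k : ℤ, ‖vFourierCoeff f k‖ ≤ annulusWienerNorm δ f := le_max_right _ _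
  have h2 : ∑' k : ℤ, ‖vFourierCoeff g k‖ ≤ ∑' k : ℤ, ‖vFourierCoeff f k‖ :=
    hs'.tsum_le_tsum hk hs
  rw [annulusWienerNorm]
  refine max_le ?_ (by linarith)
  haveI : Nonempty {z : ℂ | 1 - δ < ‖z‖ ∧ ‖z‖ < 1 + δ} :=
    ⟨⟨1, by simp [hδ0]⟩⟩
  exact ciSup_le fun z => hb z z.2.1 z.2.2

end helpers

/-- A bounded holomorphic function `f` on the annulus
`A = {1−δ < |z| < 1+δ}` with values in a complex Banach space has absolutely summable
boundary Fourier coefficients, and splits as `f = f₊ + f₋` with `f₊` holomorphic on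
`{|z| < 1+δ}`, `f₋` holomorphic on `{|z| > 1−δ}` tending to `0` at `∞`, both restrictions
to `A` bounded with absolutely summable boundary Fourier coefficients, and
`‖f₊‖ ≤ 2‖f‖`, `‖f₋‖ ≤ 2‖f‖` for the norm `max{sup-norm, Wiener norm}` on `A`. -/
theorem stmt_10 {E : Type*} [NormedAddCommGroup E] [NormedSpace ℂ E] [CompleteSpace E]
    (δ : ℝ) (hδ0 : 0 < δ) (hδ1 : δ < 1) (f : ℂ → E)
    (hfd : DifferentiableOn ℂ f {z : ℂ | 1 - δ < ‖z‖ ∧ ‖z‖ < 1 + δ})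
    (hfb : ∃ M : ℝ, ∀ z : ℂ, 1 - δ < ‖z‖ → ‖z‖ < 1 + δ → ‖f z‖ ≤ M) :
    (Summable fun k : ℤ => ‖vFourierCoeff f k‖) ∧
    ∃ fp fm : ℂ → E,
      DifferentiableOn ℂ fp {z : ℂ | ‖z‖ < 1 + δ} ∧
      DifferentiableOn ℂ fm {z : ℂ | 1 - δ < ‖z‖} ∧
      Tendsto fm (comap (fun z : ℂ => ‖z‖) atTop) (nhds 0) ∧
      (∀ z : ℂ, 1 - δ < ‖z‖ → ‖z‖ < 1 + δ → f z = fp z + fm z) ∧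
      (∃ M : ℝ, ∀ z : ℂ, 1 - δ < ‖z‖ → ‖z‖ < 1 + δ → ‖fp z‖ ≤ M) ∧
      (∃ M : ℝ, ∀ z : ℂ, 1 - δ < ‖z‖ → ‖z‖ < 1 + δ → ‖fm z‖ ≤ M) ∧
      (Summable fun k : ℤ => ‖vFourierCoeff fp k‖) ∧
      (Summable fun k : ℤ => ‖vFourierCoeff fm k‖) ∧
      annulusWienerNorm δ fp ≤ 2 * annulusWienerNorm δ f ∧
      annulusWienerNorm δ fm ≤ 2 * annulusWienerNorm δ f := by
  obtain ⟨M, hM⟩ := hfb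
  have hM0 : 0 ≤ M := (norm_nonneg _).trans (hM 1 (by simp [hδ0]) (by simp [hδ0]))
  have hlo : 0 ≤ 1 - δ := by linarith
  set a : ℤ → E := vFourierCoeff f with ha
  have haL : ∀ k r, 1 - δ < r → r < 1 + δ → laurentC f k r = a k := fun k r h1 h2 => by
    rw [ha, vFourierCoeff_eq_laurentC]
    exact laurentC_indep hlo hfd k (by linarith) (by linarith) h1 h2
  have hbd : ∀ k r, 1 - δ < r → r < 1 + δ → ‖a k‖ ≤ M * r ^ (-k) := fun k r h1 h2 => by
    rw [← haL k r h1 h2]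
    exact laurentC_norm_le k (by linarith) fun z hz => hM z (by rw [hz]; exact h1) (by rw [hz]; exact h2)
  -- summability of the two halves
  have hsp : ∀ s, 0 < s → s < 1 + δ → Summable fun n : ℕ => ‖a n‖ * s ^ n := by
    intro s hs0 hs
    obtain ⟨R, hR1, hR2⟩ := exists_between (max_lt hs (by linarith : (1:ℝ) < 1 + δ))
    have hsR : s < R := (le_max_left _ _).trans_lt hR1
    have h1R : 1 < R := (le_max_right _ _).trans_lt hR1
    have hR0 : 0 < R := by linarith
    refine Summable.of_nonneg_of_le (fun n => by positivity) (fun n => ?_)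
      ((summable_geometric_of_lt_one (r := s / R) (by positivity)
        ((div_lt_one hR0).2 hsR)).mul_left M)
    have := hbd n R (by linarith) hR2
    rw [zpow_neg, zpow_natCast] at this
    calc ‖a n‖ * s ^ n ≤ (M * (R ^ n)⁻¹) * s ^ n := by gcongr
      _ = M * (s / R) ^ n := by rw [div_pow]; ring
  have hsm : ∀ s, 0 < s → s < (1 - δ)⁻¹ →
      Summable fun n : ℕ => ‖a (-((n : ℤ) + 1))‖ * s ^ n := by
    intro s hs0 hs
    have hs' : 1 - δ < s⁻¹ := (lt_inv_comm₀ hs0 (by linarith)).1 hs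
    obtain ⟨r, hr1, hr2⟩ := exists_between (lt_min hs' (by linarith : 1 - δ < 1))
    have hrs : r < s⁻¹ := hr2.trans_le (min_le_left _ _)
    have hr1' : r < 1 := hr2.trans_le (min_le_right _ _)
    have hr0 : 0 < r := by linarith
    have hlt : r * s < 1 := by
      calc r * s < s⁻¹ * s := by gcongr
        _ = 1 := inv_mul_cancel₀ hs0.ne'
    refine Summable.of_nonneg_of_le (fun n => by positivity) (fun n => ?_)
      ((summable_geometric_of_lt_one (r := r * s) (by positivity) hlt).mul_left (M * r))
    have := hbd (-((n : ℤ) + 1)) r hr1 (by linarith)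
    rw [neg_neg, zpow_add_one₀ hr0.ne', zpow_natCast] at this
    calc ‖a (-((n : ℤ) + 1))‖ * s ^ n ≤ (M * (r ^ n * r)) * s ^ n := by gcongr
      _ = M * r * (r * s) ^ n := by rw [mul_pow]; ring
  have hi1 : 1 < (1 - δ)⁻¹ := (one_lt_inv₀ (by linarith)).2 (by linarith)
  have hap : Summable fun n : ℕ => ‖a n‖ := by
    simpa using hsp 1 one_pos (by linarith)
  have ham : Summable fun n : ℕ => ‖a (-((n : ℤ) + 1))‖ := by
    simpa using hsm 1 one_pos hi1
  have hsum : Summable fun k : ℤ => ‖a k‖ := Summable.of_nat_of_neg_add_one hap ham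
  refine ⟨hsum, ?_⟩
  set fp : ℂ → E := fun w => ∑' n : ℕ, w ^ n • a n with hfp
  set S : ℂ → E := fun u => ∑' n : ℕ, u ^ n • a (-((n : ℤ) + 1)) with hS
  set fm : ℂ → E := fun w => w⁻¹ • S w⁻¹ with hfm
  have dp : DifferentiableOn ℂ fp {z : ℂ | ‖z‖ < 1 + δ} := by
    refine (powser_diff (c := fun n : ℕ => a n) hsp).mono fun z hz => ?_
    rw [mem_ball_zero_iff]; exact hz
  have dS : DifferentiableOn ℂ S (ball 0 (1 - δ)⁻¹) :=
    powser_diff (c := fun n : ℕ => a (-((n : ℤ) + 1))) hsm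
  have dm : DifferentiableOn ℂ fm {z : ℂ | 1 - δ < ‖z‖} := by
    have di : DifferentiableOn ℂ (fun z : ℂ => z⁻¹) {z : ℂ | 1 - δ < ‖z‖} := fun z hz =>
      (differentiableAt_inv (norm_pos_iff.1 (hlo.trans_lt hz))).differentiableWithinAt
    refine di.smul (dS.comp di fun z hz => ?_)
    rw [mem_ball_zero_iff, norm_inv]
    exact (inv_lt_inv₀ (hlo.trans_lt hz) (by linarith)).2 hz
  have tm : Tendsto fm (comap (fun z : ℂ => ‖z‖) atTop) (nhds 0) := by
    have c0 : ContinuousAt (fun u : ℂ => u • S u) 0 :=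
      continuousAt_id.smul (dS.continuousOn.continuousAt
        (ball_mem_nhds 0 (by linarith : 0 < (1 - δ)⁻¹)))
    have t0 : Tendsto (fun u : ℂ => u • S u) (nhds 0) (nhds 0) := by
      simpa [ContinuousAt] using c0
    rw [comap_norm_atTop]
    exact t0.comp tendsto_inv₀_cobounded
  have dec : ∀ z : ℂ, 1 - δ < ‖z‖ → ‖z‖ < 1 + δ → f z = fp z + fm z := by
    intro w h1 h2
    obtain ⟨r, hr1, hr2⟩ := exists_between h1
    obtain ⟨R, hR1, hR2⟩ := exists_between h2
    have hr0 : 0 < r := by linarith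
    have hR0 : 0 < R := by linarith
    have ci : ∀ ρ, 1 - δ < ρ → ρ < 1 + δ → CircleIntegrable f 0 ρ := fun ρ ha hb =>
      (hfd.continuousOn.mono fun z hz => by
        rw [mem_sphere_zero_iff_norm] at hz
        exact ⟨by rw [hz]; exact ha, by rw [hz]; exact hb⟩).circleIntegrable (by linarith)
    have p1 := (hasSum_two_pi_I_cauchyPowerSeries_integral (ci R (by linarith) hR2) hR1).const_smul
      (2 * (Real.pi : ℂ) * Complex.I)⁻¹
    have p2 := (hasSum_inner hr0 (ci r hr1 (by linarith)) hr2).const_smul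
      (2 * (Real.pi : ℂ) * Complex.I)⁻¹
    rw [cauchy_annulus hlo hfd hr1 hr2 hR1 hR2]
    congr 1
    · simp only [zero_add, sub_zero] at p1
      rw [← p1.tsum_eq, hfp]
      refine tsum_congr fun n => ?_
      rw [← haL n R (by linarith) hR2, laurentC, smul_comm (w ^ n), ← circleIntegral.integral_smul (w ^ n)]
      congr 1
      refine circleIntegral.integral_congr hR0.le fun z hz => ?_
      have hz0 : z ≠ 0 := ne_of_mem_sphere hz hR0.ne'
      simp only [smul_smul]
      congr 1
      rw [zpow_sub_one₀ hz0, zpow_neg, zpow_natCast, div_pow]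
      ring
    · rw [← p2.tsum_eq, hfm]
      simp only [hS]
      rw [← tsum_const_smul'']
      refine tsum_congr fun n => ?_
      rw [← haL _ r hr1 (by linarith), laurentC, smul_smul, smul_comm (w⁻¹ * w⁻¹ ^ n),
        ← circleIntegral.integral_smul (w⁻¹ * w⁻¹ ^ n)]
      congr 1
      refine circleIntegral.integral_congr hr0.le fun z hz => ?_
      simp only [smul_smul]
      congr 1
      rw [neg_neg, add_sub_cancel_right, zpow_natCast, div_pow, inv_pow]
      ring
  have sub1 : sphere (0:ℂ) 1 ⊆ {z : ℂ | ‖z‖ < 1 + δ} := fun z hz => by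
    rw [mem_sphere_zero_iff_norm] at hz
    simp [hz, hδ0]
  have sub2 : sphere (0:ℂ) 1 ⊆ {z : ℂ | 1 - δ < ‖z‖} := fun z hz => by
    rw [mem_sphere_zero_iff_norm] at hz
    simp [hz, hδ0]
  have hadd : ∀ k, a k = vFourierCoeff fp k + vFourierCoeff fm k :=
    vFourierCoeff_add (dp.continuousOn.mono sub1) (dm.continuousOn.mono sub2)
      fun z hz => dec z (sub2 hz) (sub1 hz)
  have zp : ∀ k : ℤ, k < 0 → vFourierCoeff fp k = 0 := fun k hk =>
    laurent_fp_zero (by linarith) dp hk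
  have zm : ∀ k : ℤ, 0 ≤ k → vFourierCoeff fm k = 0 := fun k hk =>
    laurent_fm_zero hlo (by linarith) dm tm hk
  have np : ∀ k, ‖vFourierCoeff fp k‖ ≤ ‖vFourierCoeff f k‖ := fun k => by
    change _ ≤ ‖a k‖
    rcases lt_or_ge k 0 with h | h
    · rw [zp k h, norm_zero]; exact norm_nonneg _
    · rw [hadd k, zm k h, add_zero]
  have nm : ∀ k, ‖vFourierCoeff fm k‖ ≤ ‖vFourierCoeff f k‖ := fun k => by
    change _ ≤ ‖a k‖
    rcases lt_or_ge k 0 with h | h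
    · rw [hadd k, zp k h, zero_add]
    · rw [zm k h, norm_zero]; exact norm_nonneg _
  have hN : ∑' k : ℤ, ‖a k‖ ≤ annulusWienerNorm δ f := le_max_right _ _
  have hN0 : 0 ≤ annulusWienerNorm δ f := (tsum_nonneg fun _ => norm_nonneg _).trans hN
  have hfN : ∀ z : ℂ, 1 - δ < ‖z‖ → ‖z‖ < 1 + δ → ‖f z‖ ≤ annulusWienerNorm δ f := by
    intro z h1 h2
    refine le_trans ?_ (le_max_left _ _)
    refine le_ciSup (f := fun z : {z : ℂ | 1 - δ < ‖z‖ ∧ ‖z‖ < 1 + δ} => ‖f z‖) ?_ ⟨z, h1, h2⟩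
    exact ⟨M, by rintro _ ⟨y, rfl⟩; exact hM y y.2.1 y.2.2⟩
  have bp : ∀ z : ℂ, ‖z‖ ≤ 1 → ‖fp z‖ ≤ annulusWienerNorm δ f := by
    intro z hz
    refine le_trans ?_ hN
    refine (tsum_of_norm_bounded hap.hasSum fun n => ?_).trans
      (hap.tsum_le_tsum_of_inj (fun n : ℕ => (n : ℤ)) Nat.cast_injective
        (fun _ _ => norm_nonneg _) (fun _ => le_rfl) hsum)
    rw [norm_smul, norm_pow]
    exact mul_le_of_le_one_left (norm_nonneg _) (pow_le_one₀ (norm_nonneg _) hz)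
  have bm : ∀ z : ℂ, 1 ≤ ‖z‖ → ‖fm z‖ ≤ annulusWienerNorm δ f := by
    intro z hz
    have hz' : ‖z⁻¹‖ ≤ 1 := by rw [norm_inv]; exact inv_le_one_of_one_le₀ hz
    refine le_trans ?_ hN
    rw [hfm]
    simp only [norm_smul]
    refine (mul_le_of_le_one_left (norm_nonneg _) hz').trans ?_
    refine (tsum_of_norm_bounded ham.hasSum fun n => ?_).trans
      (ham.tsum_le_tsum_of_inj (fun n : ℕ => (-((n : ℤ) + 1))) (fun x y h => by simpa using h)
        (fun _ _ => norm_nonneg _) (fun _ => le_rfl) hsum)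
    rw [norm_smul, norm_pow]
    exact mul_le_of_le_one_left (norm_nonneg _) (pow_le_one₀ (norm_nonneg _) hz')
  have Bp : ∀ z : ℂ, 1 - δ < ‖z‖ → ‖z‖ < 1 + δ → ‖fp z‖ ≤ 2 * annulusWienerNorm δ f := by
    intro z h1 h2
    rcases le_total ‖z‖ 1 with h | h
    · linarith [bp z h]
    · have e : fp z = f z - fm z := by rw [dec z h1 h2, add_sub_cancel_right]
      rw [e]
      linarith [norm_sub_le (f z) (fm z), bm z h, hfN z h1 h2]
  have Bm : ∀ z : ℂ, 1 - δ < ‖z‖ → ‖z‖ < 1 + δ → ‖fm z‖ ≤ 2 * annulusWienerNorm δ f := by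
    intro z h1 h2
    rcases le_total ‖z‖ 1 with h | h
    · have e : fm z = f z - fp z := by rw [dec z h1 h2, add_sub_cancel_left]
      rw [e]
      linarith [norm_sub_le (f z) (fp z), bp z h, hfN z h1 h2]
    · linarith [bm z h]
  have Fp := wiener_final hδ0 f fp hsum np Bp
  have Fm := wiener_final hδ0 f fm hsum nm Bm
  exact ⟨fp, fm, dp, dm, tm, dec, ⟨_, Bp⟩, ⟨_, Bm⟩, Fp.1, Fm.1, Fp.2, Fm.2⟩
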